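/- Let n ≥ 2, 0 < λ ≤ Λ, let F : Sym_n → ℝ satisfy (H1) and (H2) with constants λ, Λ, and suppose F admits a fundamental solution Φ with scaling exponent α* ∈ (−1,∞). Let R₀ > 0 and let f : {x ∈ ℝⁿ : |x| ≥ R₀} × (0,∞) → (0,∞) be continuous. Suppose there exist constants ε₀, C₀ > 0, p > 1 and γ < 2 such that α* > (2−γ)/(p−1) and f(x,s) ≤ C₀·|x|^{−γ}·s^p for all |x| ≥ R₀ and 0 < s < ε₀. Then there exists a positive continuous function u on {x : |x| > R₀} that is a viscosity supersolution of F(D²u) = f(x,u) in {x : |x| > R₀} (that is, of F(D²u) = g with g(x) = f(x, u(x))). If in addition γ ≤ 0, f is defined and continuous on ℝⁿ × (0,∞) with values in (0,∞), and f(x,s) ≤ C₀·|x|^{−γ}·s^p holds for all x ∈ ℝⁿ and 0 < s < ε₀, then there exists a positive continuous function u on ℝⁿ that is a viscosity supersolution of F(D²u) = f(x,u) in all of ℝⁿ. -/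

import Mathlib

/-!
Since `(2 - γ) / (p - 1) < a`, the exponent `a` is positive and `Φ` is a positive supersolution,
homogeneous of degree `-a`.  Put `v = Φ ^ (-2/a)`, extended by `0` at the origin: it is continuous,
homogeneous of degree two and comparable with `‖x‖ ^ 2` (`exists_quadratic_profile`).  With
`s = (2 - γ) / (2 (p - 1)) < a / 2`, the function `u = k (1 + v) ^ (-s)` solves both problems when
`k > 0` is small.

Away from the origin `u` is a strictly concave increasing function of `Φ`.  Formally
`D²(h(Φ)) = h'(Φ) D²Φ + h''(Φ) DΦ ⊗ DΦ`, so ellipticity and `F(D²Φ) ≥ 0` give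
`F(D²u) ≥ lam |h''(Φ)| |DΦ|²`, and homogeneity bounds the radial derivative of `Φ` from below.  In
the viscosity setting this is done by composing a test function for `u` with `h⁻¹`
(`supersolution_away`).  At the origin, `u ≤ k (1 + c ‖x‖²) ^ (-s)` forces any test function to have
Hessian at most a negative multiple of the identity (`supersolution_origin`).  Together,
`F(D²u) ≥ k κ (1 + v) ^ (-s - 1)` for a constant `κ > 0` (`supersolution_profile`).

The nonlinearity is at most `C₀ ‖x‖ ^ (-γ) u ^ p`, a multiple of
`k ^ p (1 + v) ^ (-γ/2 - s p) = k ^ p (1 + v) ^ (-s - 1)` wherever `‖x‖ ^ (-γ)` is controlled by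
`(1 + v) ^ (-γ/2)`: everywhere if `γ ≤ 0`, and for `‖x‖ > R₀` in general.  As `p > 1`, a small
amplitude `k` makes it smaller than the gain (`growth_bound`).
-/


open MeasureTheory Real Set

noncomputable section

/-- The Hessian matrix of a function `φ : ℝⁿ → ℝ` at a point `x`. -/
def hessianMatrix {n : ℕ} (φ : EuclideanSpace ℝ (Fin n) → ℝ)
    (x : EuclideanSpace ℝ (Fin n)) : Matrix (Fin n) (Fin n) ℝ :=
  Matrix.of fun i j =>
    iteratedFDeriv ℝ 2 φ x ![EuclideanSpace.single i 1, EuclideanSpace.single j 1]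

/-- The Laplacian of `φ : ℝⁿ → ℝ`: the trace of the Hessian. -/
def lap {n : ℕ} (φ : EuclideanSpace ℝ (Fin n) → ℝ) (x : EuclideanSpace ℝ (Fin n)) : ℝ :=
  (hessianMatrix φ x).trace

/-- Hypothesis (H1): uniform ellipticity with constants `0 < lam ≤ Lam`. -/
def SatisfiesH1 {n : ℕ} (lam Lam : ℝ) (F : Matrix (Fin n) (Fin n) ℝ → ℝ) : Prop :=
  ∀ M N : Matrix (Fin n) (Fin n) ℝ, M.IsSymm → N.IsSymm → N.PosSemidef →
    lam * N.trace ≤ F (M - N) - F M ∧ F (M - N) - F M ≤ Lam * N.trace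

/-- Hypothesis (H2): positive homogeneity. -/
def SatisfiesH2 {n : ℕ} (F : Matrix (Fin n) (Fin n) ℝ → ℝ) : Prop :=
  ∀ t : ℝ, 0 ≤ t → ∀ M : Matrix (Fin n) (Fin n) ℝ, M.IsSymm → F (t • M) = t * F M

/-- `u` is a viscosity supersolution of `F(D²u) = g` in `Ω`. -/
def ViscositySupersolution {n : ℕ} (F : Matrix (Fin n) (Fin n) ℝ → ℝ)
    (Ω : Set (EuclideanSpace ℝ (Fin n))) (g u : EuclideanSpace ℝ (Fin n) → ℝ) : Prop :=
  ∀ x₀ ∈ Ω, ∀ φ : EuclideanSpace ℝ (Fin n) → ℝ, ContDiffAt ℝ 2 φ x₀ →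
    IsLocalMinOn (fun x => u x - φ x) Ω x₀ → g x₀ ≤ F (hessianMatrix φ x₀)

/-- `u` is a viscosity subsolution of `F(D²u) = g` in `Ω`. -/
def ViscositySubsolution {n : ℕ} (F : Matrix (Fin n) (Fin n) ℝ → ℝ)
    (Ω : Set (EuclideanSpace ℝ (Fin n))) (g u : EuclideanSpace ℝ (Fin n) → ℝ) : Prop :=
  ∀ x₀ ∈ Ω, ∀ φ : EuclideanSpace ℝ (Fin n) → ℝ, ContDiffAt ℝ 2 φ x₀ →
    IsLocalMaxOn (fun x => u x - φ x) Ω x₀ → F (hessianMatrix φ x₀) ≤ g x₀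

/-- `u` is a viscosity solution of `F(D²u) = g` in `Ω`. -/
def ViscositySolution {n : ℕ} (F : Matrix (Fin n) (Fin n) ℝ → ℝ)
    (Ω : Set (EuclideanSpace ℝ (Fin n))) (g u : EuclideanSpace ℝ (Fin n) → ℝ) : Prop :=
  ViscositySubsolution F Ω g u ∧ ViscositySupersolution F Ω g u

/-- `Φ` is a fundamental solution of `F` with scaling exponent `a`. -/
def IsFundamentalSolution {n : ℕ} (F : Matrix (Fin n) (Fin n) ℝ → ℝ)
    (Φ : EuclideanSpace ℝ (Fin n) → ℝ) (a : ℝ) : Prop :=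
  ContinuousOn Φ {x : EuclideanSpace ℝ (Fin n) | x ≠ 0} ∧
  (¬ ∃ c : ℝ, ∀ x : EuclideanSpace ℝ (Fin n), x ≠ 0 → Φ x = c) ∧
  ViscositySolution F {x : EuclideanSpace ℝ (Fin n) | x ≠ 0} (fun _ => 0) Φ ∧
  (a = 0 → ∀ σ : ℝ, 0 < σ → ∀ x : EuclideanSpace ℝ (Fin n), x ≠ 0 →
    Φ x = Φ (σ • x) + Real.log σ) ∧
  (a ≠ 0 → ∀ σ : ℝ, 0 < σ → ∀ x : EuclideanSpace ℝ (Fin n), x ≠ 0 →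
    Φ x = σ ^ a * Φ (σ • x) ∧ 0 < a * Φ x)

/-- `Ω ⊆ ℝⁿ` is an exterior domain. -/
def IsExteriorDomain {n : ℕ} (Ω : Set (EuclideanSpace ℝ (Fin n))) : Prop :=
  IsOpen Ω ∧ IsConnected Ω ∧ ∃ R : ℝ, 0 < R ∧
    (Metric.ball (0 : EuclideanSpace ℝ (Fin n)) R)ᶜ ⊆ Ω ∧
    Ω ⊆ {x : EuclideanSpace ℝ (Fin n) | x ≠ 0}

/-- The Pucci maximal operator `𝒫⁺_{lam,Lam}`, defined via the eigenvalues. -/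
def pucciPlus {n : ℕ} (lam Lam : ℝ) (M : Matrix (Fin n) (Fin n) ℝ) : ℝ :=
  if hM : M.IsHermitian then
    -(lam * ∑ j ∈ Finset.univ.filter fun j => 0 < hM.eigenvalues j, hM.eigenvalues j)
      - Lam * ∑ j ∈ Finset.univ.filter fun j => hM.eigenvalues j < 0, hM.eigenvalues j
  else 0

/-- The Pucci minimal operator `𝒫⁻_{lam,Lam}`, defined via the eigenvalues. -/
def pucciMinus {n : ℕ} (lam Lam : ℝ) (M : Matrix (Fin n) (Fin n) ℝ) : ℝ :=
  if hM : M.IsHermitian then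
    -(Lam * ∑ j ∈ Finset.univ.filter fun j => 0 < hM.eigenvalues j, hM.eigenvalues j)
      - lam * ∑ j ∈ Finset.univ.filter fun j => hM.eigenvalues j < 0, hM.eigenvalues j
  else 0

/-- The radial functions `ξ_α`. -/
def xiFun {n : ℕ} (α : ℝ) (x : EuclideanSpace ℝ (Fin n)) : ℝ :=
  if 0 < α then ‖x‖ ^ (-α) else if α = 0 then -Real.log ‖x‖ else -(‖x‖ ^ (-α))

end
open Filter Topology

/-! ### Hessian matrices and second-order conditions -/

lemma hessianMatrix_apply_eq {n : ℕ} (φ : EuclideanSpace ℝ (Fin n) → ℝ)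
    (x : EuclideanSpace ℝ (Fin n)) (i j : Fin n) :
    hessianMatrix φ x i j = fderiv ℝ (fderiv ℝ φ) x (EuclideanSpace.single i 1)
      (EuclideanSpace.single j 1) := by
  simp [hessianMatrix, iteratedFDeriv_two_apply]

lemma hessianMatrix_isSymm {n : ℕ} {φ : EuclideanSpace ℝ (Fin n) → ℝ}
    {x : EuclideanSpace ℝ (Fin n)} (h : ContDiffAt ℝ 2 φ x) : (hessianMatrix φ x).IsSymm := by
  ext i j
  have := h.isSymmSndFDerivAt (by simp)
  simp only [Matrix.transpose_apply, hessianMatrix_apply_eq]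
  exact this _ _

lemma hasFDerivAt_fderiv {n : ℕ} {φ : EuclideanSpace ℝ (Fin n) → ℝ}
    {x : EuclideanSpace ℝ (Fin n)} (h : ContDiffAt ℝ 2 φ x) :
    HasFDerivAt (fderiv ℝ φ) (fderiv ℝ (fderiv ℝ φ) x) x := by
  have h1 : ContDiffAt ℝ 1 (fderiv ℝ φ) x := h.fderiv_right (by norm_num)
  exact (h1.differentiableAt (by norm_num)).hasFDerivAt

lemma eventually_hasFDerivAt {n : ℕ} {φ : EuclideanSpace ℝ (Fin n) → ℝ}
    {x : EuclideanSpace ℝ (Fin n)} (h : ContDiffAt ℝ 2 φ x) :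
    ∀ᶠ y in 𝓝 x, HasFDerivAt φ (fderiv ℝ φ y) y := by
  filter_upwards [h.eventually (by simp)] with y hy
  exact (hy.differentiableAt (by norm_num)).hasFDerivAt

/-- The chain rule `D²(G ∘ φ) = G'(φ) D²φ + G''(φ) Dφ ⊗ Dφ`. -/
lemma hessianMatrix_comp {n : ℕ} {φ : EuclideanSpace ℝ (Fin n) → ℝ}
    {x : EuclideanSpace ℝ (Fin n)} (h : ContDiffAt ℝ 2 φ x) {G G1 : ℝ → ℝ} {G2 : ℝ}
    (hG : ∀ᶠ y in 𝓝 (φ x), HasDerivAt G (G1 y) y) (hG1 : HasDerivAt G1 G2 (φ x)) :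
    hessianMatrix (fun z => G (φ z)) x = G1 (φ x) • hessianMatrix φ x
      + G2 • Matrix.vecMulVec (fun i => fderiv ℝ φ x (EuclideanSpace.single i 1))
        (fun i => fderiv ℝ φ x (EuclideanSpace.single i 1)) := by
  have hev : fderiv ℝ (fun z => G (φ z)) =ᶠ[𝓝 x] fun z => G1 (φ z) • fderiv ℝ φ z := by
    filter_upwards [eventually_hasFDerivAt h, h.continuousAt.eventually hG] with z hz hz'
    exact (hz'.comp_hasFDerivAt z hz).fderiv
  have hd := (hG1.comp_hasFDerivAt x
    (h.differentiableAt (by norm_num)).hasFDerivAt).smul (hasFDerivAt_fderiv h)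
  have hd' : fderiv ℝ (fun z => G1 (φ z) • fderiv ℝ φ z) x = _ := hd.fderiv
  ext i j
  simp only [hessianMatrix_apply_eq, hev.fderiv_eq, hd', Matrix.add_apply, Matrix.smul_apply,
    Matrix.vecMulVec_apply]
  simp [mul_assoc]

lemma sum_smul_single {n : ℕ} (x : EuclideanSpace ℝ (Fin n)) :
    ∑ i, x i • EuclideanSpace.single i (1 : ℝ) = x := by
  have := (EuclideanSpace.basisFun (Fin n) ℝ).sum_repr x
  simpa using this

lemma dotProduct_hessianMatrix {n : ℕ} (φ : EuclideanSpace ℝ (Fin n) → ℝ)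
    (x e : EuclideanSpace ℝ (Fin n)) :
    (fun i => e i) ⬝ᵥ (hessianMatrix φ x).mulVec (fun i => e i)
      = fderiv ℝ (fderiv ℝ φ) x e e := by
  conv_rhs => rw [← sum_smul_single e]
  simp only [map_sum, map_smul, sum_apply, smul_apply,
    smul_eq_mul, dotProduct, Matrix.mulVec, hessianMatrix_apply_eq, Finset.mul_sum]
  rw [Finset.sum_comm]
  refine Finset.sum_congr rfl fun i _ => Finset.sum_congr rfl fun j _ => ?_
  ring

/-- Cauchy–Schwarz for the gradient against the radial direction, in coordinates. -/
lemma fderiv_self_sq_le {n : ℕ} (L : EuclideanSpace ℝ (Fin n) →L[ℝ] ℝ)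
    (x : EuclideanSpace ℝ (Fin n)) :
    (L x) ^ 2 ≤ (Matrix.vecMulVec (fun i => L (EuclideanSpace.single i 1))
        (fun i => L (EuclideanSpace.single i 1))).trace * ‖x‖ ^ 2 := by
  have h1 : L x = ∑ i, L (EuclideanSpace.single i 1) * x i := by
    conv_lhs => rw [← sum_smul_single x]
    simp [map_sum, mul_comm]
  rw [h1, EuclideanSpace.real_norm_sq_eq]
  refine (Finset.sum_mul_sq_le_sq_mul_sq _ _ _).trans_eq ?_
  simp [Matrix.trace, Matrix.vecMulVec_apply, sq]

/-- Second-order necessary condition at a local maximum of a function of one variable. -/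
lemma second_deriv_nonpos {g g1 : ℝ → ℝ} {g2 t₀ : ℝ} (hg : ∀ᶠ t in 𝓝 t₀, HasDerivAt g (g1 t) t)
    (hg1 : HasDerivAt g1 g2 t₀) (hmax : IsLocalMax g t₀) : g2 ≤ 0 := by
  by_contra! hpos
  have hev : deriv g =ᶠ[𝓝 t₀] g1 := hg.mono fun t ht => ht.deriv
  have h2 : deriv (deriv g) t₀ = g2 := by rw [hev.deriv_eq, hg1.deriv]
  have hmin : IsLocalMin g t₀ := isLocalMin_of_deriv_deriv_pos (by rwa [h2]) hmax.deriv_eq_zero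
    hg.self_of_nhds.continuousAt
  -- a local maximum that is also a local minimum makes `g` locally constant
  have hconst : g =ᶠ[𝓝 t₀] fun _ => g t₀ := by
    filter_upwards [hmax, hmin] with t h h'
    exact le_antisymm h h'
  have : deriv (deriv g) t₀ = 0 := by
    rw [hconst.deriv.deriv_eq]; simp
  linarith

/-! ### The homogeneous profile of degree two -/

/-- The function `Φ ^ (-2/a)`, extended by `0` at the origin, is homogeneous of degree two and
therefore comparable with `‖x‖ ^ 2`. -/
lemma exists_quadratic_profile {n : ℕ} (hn : 2 ≤ n) {Φ : EuclideanSpace ℝ (Fin n) → ℝ} {a : ℝ}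
    (ha : 0 < a) (hc : ContinuousOn Φ {x : EuclideanSpace ℝ (Fin n) | x ≠ 0})
    (hh : ∀ σ : ℝ, 0 < σ → ∀ x : EuclideanSpace ℝ (Fin n), x ≠ 0 →
      Φ x = σ ^ a * Φ (σ • x) ∧ 0 < a * Φ x) :
    ∃ v : EuclideanSpace ℝ (Fin n) → ℝ, ∃ c C : ℝ, 0 < c ∧ 0 < C ∧ Continuous v ∧
      (∀ x, c * ‖x‖ ^ 2 ≤ v x) ∧ (∀ x, v x ≤ C * ‖x‖ ^ 2) ∧
      (∀ σ : ℝ, 0 < σ → ∀ x, v (σ • x) = σ ^ 2 * v x) ∧ ∀ x, x ≠ 0 → v x ^ (-(a / 2)) = Φ x := by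
  classical
  have hpos : ∀ x, x ≠ 0 → 0 < Φ x := fun x hx =>
    pos_of_mul_pos_right (hh 1 one_pos x hx).2 ha.le
  set v : EuclideanSpace ℝ (Fin n) → ℝ := fun x => if x = 0 then 0 else Φ x ^ (-(2 / a)) with hv
  have hv0 : v 0 = 0 := by simp [hv]
  have hvx : ∀ x, x ≠ 0 → v x = Φ x ^ (-(2 / a)) := fun x hx => by simp [hv, hx]
  have hvpos : ∀ x, x ≠ 0 → 0 < v x := fun x hx => by
    rw [hvx x hx]; exact Real.rpow_pos_of_pos (hpos x hx) _
  have hvc : ContinuousOn v {x | x ≠ 0} := by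
    have : ContinuousOn (fun x => Φ x ^ (-(2 / a))) {x : EuclideanSpace ℝ (Fin n) | x ≠ 0} :=
      hc.rpow_const fun x hx => Or.inl (hpos x hx).ne'
    exact this.congr fun x hx => hvx x hx
  have hhom : ∀ σ : ℝ, 0 < σ → ∀ x, v (σ • x) = σ ^ 2 * v x := by
    intro σ hσ x
    by_cases hx : x = 0
    · simp [hx, hv0]
    have hσx : σ • x ≠ 0 := smul_ne_zero hσ.ne' hx
    rw [hvx x hx, hvx _ hσx, (hh σ hσ x hx).1,
      Real.mul_rpow (Real.rpow_nonneg hσ.le _) (hpos _ hσx).le, ← Real.rpow_mul hσ.le, ← mul_assoc]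
    have : a * -(2 / a) = -2 := by field_simp
    rw [this, ← Real.rpow_natCast, ← Real.rpow_add hσ]
    simp
  have hne : (Metric.sphere (0 : EuclideanSpace ℝ (Fin n)) 1).Nonempty :=
    ⟨EuclideanSpace.single ⟨0, by omega⟩ 1, by simp⟩
  have hsub : Metric.sphere (0 : EuclideanSpace ℝ (Fin n)) 1 ⊆ {x | x ≠ 0} := by
    rintro x hx rfl
    simp at hx
  obtain ⟨x₁, hx₁, hmin⟩ := (isCompact_sphere (0 : EuclideanSpace ℝ (Fin n)) 1).exists_isMinOn hne
    (hvc.mono hsub)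
  obtain ⟨x₂, hx₂, hmax⟩ := (isCompact_sphere (0 : EuclideanSpace ℝ (Fin n)) 1).exists_isMaxOn hne
    (hvc.mono hsub)
  have hscale : ∀ x : EuclideanSpace ℝ (Fin n), x ≠ 0 → ∃ y ∈ Metric.sphere
      (0 : EuclideanSpace ℝ (Fin n)) 1, v x = ‖x‖ ^ 2 * v y := by
    intro x hx
    have hnx : 0 < ‖x‖ := norm_pos_iff.2 hx
    refine ⟨‖x‖⁻¹ • x, by simp [norm_smul, hnx.ne'], ?_⟩
    rw [← hhom _ hnx, smul_smul, mul_inv_cancel₀ hnx.ne', one_smul]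
  have hlow : ∀ x, v x₁ * ‖x‖ ^ 2 ≤ v x := by
    intro x
    by_cases hx : x = 0
    · simp [hx, hv0]
    obtain ⟨y, hy, hxy⟩ := hscale x hx
    rw [hxy, mul_comm]
    exact mul_le_mul_of_nonneg_left (hmin hy) (by positivity)
  have hup : ∀ x, v x ≤ v x₂ * ‖x‖ ^ 2 := by
    intro x
    by_cases hx : x = 0
    · simp [hx, hv0]
    obtain ⟨y, hy, hxy⟩ := hscale x hx
    rw [hxy, mul_comm]
    exact mul_le_mul_of_nonneg_right (hmax hy) (by positivity)
  refine ⟨v, v x₁, v x₂, hvpos _ (hsub hx₁), hvpos _ (hsub hx₂), ?_, hlow, hup, hhom, ?_⟩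
  · rw [continuous_iff_continuousAt]
    intro x
    by_cases hx : x = 0
    · subst hx
      rw [ContinuousAt, hv0]
      refine tendsto_of_tendsto_of_tendsto_of_le_of_le tendsto_const_nhds
        (h := fun x => v x₂ * ‖x‖ ^ 2) ?_ (fun x => ?_) hup
      · have : Continuous fun x : EuclideanSpace ℝ (Fin n) => v x₂ * ‖x‖ ^ 2 := by fun_prop
        simpa using this.tendsto 0
      · exact le_trans (mul_nonneg (hvpos _ (hsub hx₁)).le (by positivity)) (hlow x)
    · exact hvc.continuousAt (isOpen_ne.mem_nhds hx)
  · intro x hx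
    rw [hvx x hx, ← Real.rpow_mul (hpos x hx).le]
    have : -(2 / a) * -(a / 2) = 1 := by field_simp
    rw [this, Real.rpow_one]

/-! ### The concave transformation of the fundamental solution -/

lemma F_zero {n : ℕ} {F : Matrix (Fin n) (Fin n) ℝ → ℝ} (hF2 : SatisfiesH2 F) : F 0 = 0 := by
  simpa using hF2 0 le_rfl 0 (Matrix.isSymm_zero)

/-- The inverse of the increasing concave map `t ↦ (1 + t ^ (-1/b)) ^ (-s)`.  With `b = a / 2` it
recovers `Φ` from `(1 + v) ^ (-s)`, where `v = Φ ^ (-2/a)`.  Only values in `(0, 1)` are used. -/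
noncomputable def invProfile (s b : ℝ) (y : ℝ) : ℝ := (y ^ (-(1 / s)) - 1) ^ (-b)

/-- The derivative of `invProfile s b` on `(0, 1)`. -/
noncomputable def invProfileDeriv (s b : ℝ) (y : ℝ) : ℝ :=
  b / s * ((y ^ (-(1 / s)) - 1) ^ (-b - 1) * y ^ (-(1 / s) - 1))

lemma rpow_neg_inv_sub_one_pos {s y : ℝ} (hs : 0 < s) (hy : 0 < y) (hy1 : y < 1) :
    0 < y ^ (-(1 / s)) - 1 := by
  have := Real.one_lt_rpow_of_pos_of_lt_one_of_neg hy hy1 (z := -(1 / s)) (by simpa using hs)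
  linarith

lemma hasDerivAt_invProfile {s b y : ℝ} (hs : 0 < s) (hy : 0 < y) (hy1 : y < 1) :
    HasDerivAt (invProfile s b) (invProfileDeriv s b y) y := by
  have hW := rpow_neg_inv_sub_one_pos hs hy hy1
  have h1 := ((Real.hasDerivAt_rpow_const (x := y) (p := -(1 / s)) (Or.inl hy.ne')).sub_const
    1).rpow_const (p := -b) (Or.inl hW.ne')
  refine HasDerivAt.congr_deriv h1 ?_
  unfold invProfileDeriv
  field_simp

/-- The logarithmic derivative of the derivative of `invProfile` at `y = (1 + v) ^ (-s)`. -/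
lemma hasDerivAt_invProfileDeriv {s b v y : ℝ} (hs : 0 < s) (hv : 0 < v)
    (hy : y = (1 + v) ^ (-s)) :
    HasDerivAt (invProfileDeriv s b)
      (invProfileDeriv s b y * (((b + 1) + (b - s) * v) / (s * y * v))) y := by
  have hy0 : 0 < y := by rw [hy]; positivity
  have hyv : y ^ (-(1 / s)) = 1 + v := by
    rw [hy, ← Real.rpow_mul (by positivity)]
    have : -s * -(1 / s) = 1 := by field_simp
    rw [this, Real.rpow_one]
  have hW : y ^ (-(1 / s)) - 1 = v := by rw [hyv]; ring
  have h1 := ((((Real.hasDerivAt_rpow_const (x := y) (p := -(1 / s)) (Or.inl hy0.ne')).sub_const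
    1).rpow_const (p := -b - 1) (Or.inl (by rw [hW]; exact hv.ne'))).mul
    (Real.hasDerivAt_rpow_const (x := y) (p := -(1 / s) - 1) (Or.inl hy0.ne'))).const_mul (b / s)
  refine HasDerivAt.congr_deriv h1 ?_
  have e1 : y ^ (-(1 / s) - 1) = (1 + v) / y := by
    rw [Real.rpow_sub_one hy0.ne', hyv]
  have e2 : y ^ (-(1 / s) - 1 - 1) = (1 + v) / y / y := by
    rw [Real.rpow_sub_one hy0.ne', e1]
  have e3 : v ^ (-b - 1 - 1) = v ^ (-b - 1) / v := Real.rpow_sub_one hv.ne' _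
  simp only [invProfileDeriv, e1, e2, hW, e3]
  field_simp
  ring

/-! ### Supersolution estimates -/

/-- Away from the origin: if `φ` touches `u = (1 + v) ^ (-s)` from below, then `invProfile ∘ φ`
touches the supersolution `Φ` from below, and the convexity of `invProfile` leaves a gain
proportional to `|Dφ|²`.  Homogeneity of `v` bounds the radial part of `Dφ` from below. -/
lemma supersolution_away {n : ℕ} {lam Lam : ℝ} (hlam : 0 < lam)
    {F : Matrix (Fin n) (Fin n) ℝ → ℝ} (hF1 : SatisfiesH1 lam Lam F) (hF2 : SatisfiesH2 F)
    {Φ v : EuclideanSpace ℝ (Fin n) → ℝ} {a s c : ℝ} (hs : 0 < s) (hsa : s < a / 2) (hc : 0 < c)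
    (hΦ : ViscositySupersolution F {x : EuclideanSpace ℝ (Fin n) | x ≠ 0} (fun _ => 0) Φ)
    (hvlow : ∀ x, c * ‖x‖ ^ 2 ≤ v x)
    (hvhom : ∀ σ : ℝ, 0 < σ → ∀ x, v (σ • x) = σ ^ 2 * v x)
    (hvΦ : ∀ x, x ≠ 0 → v x ^ (-(a / 2)) = Φ x)
    {x₀ : EuclideanSpace ℝ (Fin n)} (hx₀ : x₀ ≠ 0) {φ : EuclideanSpace ℝ (Fin n) → ℝ}
    (hφ : ContDiffAt ℝ 2 φ x₀) (heq : φ x₀ = (1 + v x₀) ^ (-s))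
    (hle : ∀ᶠ x in 𝓝 x₀, φ x ≤ (1 + v x) ^ (-s)) :
    4 * lam * (a / 2 - s) * s * c * (1 + v x₀) ^ (-s - 1) ≤ F (hessianMatrix φ x₀) := by
  have hvpos : ∀ x, x ≠ 0 → 0 < v x := fun x hx => by
    have : 0 < ‖x‖ := norm_pos_iff.2 hx
    exact lt_of_lt_of_le (by positivity) (hvlow x)
  have hv₀ := hvpos x₀ hx₀
  set b := a / 2 with hb
  have hb0 : 0 < b := hs.trans hsa
  have hupos : ∀ x, x ≠ 0 → 0 < (1 + v x) ^ (-s) := fun x hx => by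
    have := hvpos x hx
    positivity
  have hu1 : ∀ x, x ≠ 0 → (1 + v x) ^ (-s) < 1 := fun x hx =>
    Real.rpow_lt_one_of_one_lt_of_neg (by linarith [hvpos x hx]) (by linarith)
  have hG : ∀ x, x ≠ 0 → invProfile s b ((1 + v x) ^ (-s)) = Φ x := fun x hx => by
    have := hvpos x hx
    rw [invProfile, ← Real.rpow_mul (by positivity)]
    have e : -s * -(1 / s) = 1 := by field_simp
    rw [e, Real.rpow_one, add_sub_cancel_left, hvΦ x hx]
  have hφ0 : 0 < φ x₀ := by rw [heq]; exact hupos _ hx₀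
  have hφ1 : φ x₀ < 1 := by rw [heq]; exact hu1 _ hx₀
  have hne : ∀ᶠ x in 𝓝 x₀, x ≠ 0 := isOpen_ne.mem_nhds hx₀
  set H := hessianMatrix φ x₀ with hH
  set p : Fin n → ℝ := fun i => fderiv ℝ φ x₀ (EuclideanSpace.single i 1) with hp
  set K := ((b + 1) + (b - s) * v x₀) / (s * φ x₀ * v x₀) with hK
  have hK0 : 0 < K := by
    have := sub_pos.2 hsa
    positivity
  have hD1pos : 0 < invProfileDeriv s b (φ x₀) := by
    have := rpow_neg_inv_sub_one_pos hs hφ0 hφ1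
    rw [invProfileDeriv]; positivity
  have hder : ∀ᶠ y in 𝓝 (φ x₀), HasDerivAt (invProfile s b) (invProfileDeriv s b y) y := by
    filter_upwards [isOpen_Ioo.mem_nhds (⟨hφ0, hφ1⟩ : φ x₀ ∈ Set.Ioo (0 : ℝ) 1)] with y hy
    exact hasDerivAt_invProfile hs hy.1 hy.2
  have hHess := hessianMatrix_comp hφ hder (hasDerivAt_invProfileDeriv hs hv₀ heq)
  -- `invProfile ∘ φ` is an admissible test function for `Φ`
  have hΨ : ContDiffAt ℝ 2 (fun z => invProfile s b (φ z)) x₀ := by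
    unfold invProfile
    refine ((hφ.rpow_const_of_ne hφ0.ne').sub contDiffAt_const).rpow_const_of_ne ?_
    exact (rpow_neg_inv_sub_one_pos hs hφ0 hφ1).ne'
  have hmin : IsLocalMinOn (fun x => Φ x - invProfile s b (φ x))
      {x : EuclideanSpace ℝ (Fin n) | x ≠ 0} x₀ := by
    refine IsLocalMin.on ?_ _
    filter_upwards [hle, hne, hφ.continuousAt.eventually (lt_mem_nhds hφ0)] with x h1 h2 h3
    simp only [heq, hG x₀ hx₀, sub_self, sub_nonneg]
    rw [← hG x h2]
    unfold invProfile
    have h4 := rpow_neg_inv_sub_one_pos hs (hupos x h2) (hu1 x h2)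
    refine Real.rpow_le_rpow_of_nonpos h4 ?_ (by linarith)
    have := Real.rpow_le_rpow_of_nonpos h3 h1 (z := -(1 / s)) (by simpa using hs.le)
    linarith
  have hF0 : 0 ≤ F (hessianMatrix (fun z => invProfile s b (φ z)) x₀) := hΦ x₀ hx₀ _ hΨ hmin
  -- ellipticity removes the rank-one term and homogeneity removes the scalar factor
  set D1 := invProfileDeriv s b (φ x₀) with hD1
  have hHsymm : H.IsSymm := hessianMatrix_isSymm hφ
  have hpp : (Matrix.vecMulVec p p).PosSemidef := by
    simpa using Matrix.posSemidef_vecMulVec_self_star p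
  have hppN : ((D1 * K) • Matrix.vecMulVec p p).PosSemidef := hpp.smul (by positivity)
  have hell := (hF1 _ ((D1 * K) • Matrix.vecMulVec p p) (hessianMatrix_isSymm hΨ)
    (by
      have := hppN.isHermitian
      rwa [Matrix.IsHermitian, Matrix.conjTranspose_eq_transpose_of_trivial] at this) hppN).1
  have hrew : hessianMatrix (fun z => invProfile s b (φ z)) x₀ - (D1 * K) • Matrix.vecMulVec p p
      = D1 • H := by
    rw [hHess]; exact add_sub_cancel_right _ _
  rw [hrew, hF2 D1 hD1pos.le H hHsymm, Matrix.trace_smul, smul_eq_mul] at hell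
  have hFH : lam * (K * (Matrix.vecMulVec p p).trace) ≤ F H := by
    have : D1 * (lam * (K * (Matrix.vecMulVec p p).trace)) ≤ D1 * F H := by linarith
    exact le_of_mul_le_mul_left this hD1pos
  -- the radial derivative of `φ` agrees with that of `u`
  have hrad : fderiv ℝ φ x₀ x₀ = -(2 * s * v x₀ * (1 + v x₀) ^ (-s - 1)) := by
    have hline : HasDerivAt (fun t : ℝ => t • x₀) x₀ 1 := by
      simpa using (hasDerivAt_id (1 : ℝ)).smul_const x₀
    have hφ' : HasFDerivAt φ (fderiv ℝ φ x₀) ((1 : ℝ) • x₀) := by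
      rw [one_smul]; exact (hφ.differentiableAt (by norm_num)).hasFDerivAt
    have h1 := hφ'.comp_hasDerivAt (1 : ℝ) hline
    have h2 : HasDerivAt (fun t : ℝ => 1 + t ^ 2 * v x₀) (2 * v x₀) 1 := by
      simpa using (((hasDerivAt_id (1 : ℝ)).pow 2).mul_const (v x₀)).const_add 1
    have h3 := h2.rpow_const (p := -s) (Or.inl (by positivity))
    have h4 := h1.sub h3
    have hmax : IsLocalMax ((φ ∘ fun t : ℝ => t • x₀)
        - fun t : ℝ => (1 + t ^ 2 * v x₀) ^ (-s)) 1 := by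
      have ht : Tendsto (fun t : ℝ => t • x₀) (𝓝 1) (𝓝 x₀) := by
        simpa using hline.continuousAt.tendsto
      filter_upwards [ht.eventually hle, lt_mem_nhds (zero_lt_one (α := ℝ))] with t h5 h6
      rw [hvhom t h6] at h5
      simpa [heq] using h5
    have h7 := hmax.hasDerivAt_eq_zero h4
    simp only [one_pow, one_mul] at h7
    linarith
  have hCS : (2 * s * v x₀ * (1 + v x₀) ^ (-s - 1)) ^ 2
      ≤ (Matrix.vecMulVec p p).trace * ‖x₀‖ ^ 2 := by
    have := fderiv_self_sq_le (fderiv ℝ φ x₀) x₀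
    rwa [hrad, neg_sq] at this
  have hT : 0 ≤ (Matrix.vecMulVec p p).trace := hpp.trace_nonneg
  refine le_trans ?_ hFH
  set T := (Matrix.vecMulVec p p).trace with hTdef
  set w := v x₀ with hw
  have hE : (1 + w) ^ (-s - 1) = φ x₀ / (1 + w) := by
    rw [Real.rpow_sub_one (by positivity), heq]
  rw [hE] at hCS ⊢
  have hvl := hvlow x₀
  have hCS' : c * (2 * s * w * (φ x₀ / (1 + w))) ^ 2 ≤ T * w :=
    calc c * (2 * s * w * (φ x₀ / (1 + w))) ^ 2 ≤ c * (T * ‖x₀‖ ^ 2) := by gcongr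
      _ = T * (c * ‖x₀‖ ^ 2) := by ring
      _ ≤ T * w := by gcongr
  have hKlow : (b - s) * (1 + w) / (s * φ x₀ * w) ≤ K := by
    rw [hK]
    gcongr
    nlinarith
  have hTlow : c * (4 * s ^ 2 * w * (φ x₀ / (1 + w)) ^ 2) ≤ T := by
    have : w * (c * (4 * s ^ 2 * w * (φ x₀ / (1 + w)) ^ 2)) ≤ w * T := by
      calc _ = c * (2 * s * w * (φ x₀ / (1 + w))) ^ 2 := by ring
        _ ≤ T * w := hCS'
        _ = w * T := by ring
    exact le_of_mul_le_mul_left this hv₀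
  have hbs : 0 < b - s := sub_pos.2 hsa
  calc 4 * lam * (b - s) * s * c * (φ x₀ / (1 + w))
      = lam * ((b - s) * (1 + w) / (s * φ x₀ * w)
          * (c * (4 * s ^ 2 * w * (φ x₀ / (1 + w)) ^ 2))) := by
        field_simp
    _ ≤ lam * (K * T) := by gcongr

/-- At the origin: a test function below `(1 + v) ^ (-s) ≤ (1 + c ‖x‖²) ^ (-s)` has Hessian at most
`-2 s c I`, so ellipticity gives a positive lower bound. -/
lemma supersolution_origin {n : ℕ} {lam Lam : ℝ}
    (hlam : 0 < lam) {F : Matrix (Fin n) (Fin n) ℝ → ℝ} (hF1 : SatisfiesH1 lam Lam F)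
    (hF2 : SatisfiesH2 F) {v : EuclideanSpace ℝ (Fin n) → ℝ} {s c : ℝ} (hs : 0 < s) (hc : 0 < c)
    (hvlow : ∀ x, c * ‖x‖ ^ 2 ≤ v x)
    {φ : EuclideanSpace ℝ (Fin n) → ℝ} (hφ : ContDiffAt ℝ 2 φ 0) (heq : φ 0 = 1)
    (hle : ∀ᶠ x in 𝓝 0, φ x ≤ (1 + v x) ^ (-s)) :
    2 * s * c * lam * n ≤ F (hessianMatrix φ 0) := by
  set H := hessianMatrix φ 0 with hH
  have hsymm : H.IsSymm := hessianMatrix_isSymm hφ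
  have hquad : ∀ e : EuclideanSpace ℝ (Fin n),
      fderiv ℝ (fderiv ℝ φ) 0 e e + 2 * s * c * ‖e‖ ^ 2 ≤ 0 := by
    intro e
    set m := c * ‖e‖ ^ 2 with hm
    have hm0 : 0 ≤ m := by positivity
    have hline : ∀ t : ℝ, HasDerivAt (fun t : ℝ => t • e) e t := fun t => by
      simpa using (hasDerivAt_id t).smul_const e
    have ht : Tendsto (fun t : ℝ => t • e) (𝓝 0) (𝓝 0) := by
      simpa using (hline 0).continuousAt.tendsto
    have hin : ∀ t : ℝ, HasDerivAt (fun t : ℝ => 1 + m * t ^ 2) (m * (2 * t)) t := fun t => by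
      simpa using (((hasDerivAt_id t).pow 2).const_mul m).const_add 1
    have hpos : ∀ t : ℝ, 0 < 1 + m * t ^ 2 := fun t => by positivity
    refine second_deriv_nonpos (t₀ := 0) (g := fun t => φ (t • e) - (1 + m * t ^ 2) ^ (-s))
      (g1 := fun t => fderiv ℝ φ (t • e) e - m * (2 * t) * (-s) * (1 + m * t ^ 2) ^ (-s - 1))
      ?_ ?_ ?_
    · filter_upwards [ht.eventually (eventually_hasFDerivAt hφ)] with t h1
      have h2 : HasDerivAt (fun t : ℝ => φ (t • e)) (fderiv ℝ φ (t • e) e) t :=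
        h1.comp_hasDerivAt t (hline t)
      exact h2.sub ((hin t).rpow_const (Or.inl (hpos t).ne'))
    · have h0 : HasFDerivAt (fderiv ℝ φ) (fderiv ℝ (fderiv ℝ φ) 0) ((0 : ℝ) • e) := by
        rw [zero_smul]; exact hasFDerivAt_fderiv hφ
      have h1' : HasDerivAt (fun t : ℝ => fderiv ℝ φ (t • e)) (fderiv ℝ (fderiv ℝ φ) 0 e) 0 :=
        h0.comp_hasDerivAt (0 : ℝ) (hline 0)
      have h1 := h1'.clm_apply (hasDerivAt_const (0 : ℝ) e)
      have h2 : HasDerivAt (fun t : ℝ => m * (2 * t) * (-s)) (m * 2 * (-s)) 0 := by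
        simpa using (((hasDerivAt_id (0 : ℝ)).const_mul 2).const_mul m).mul_const (-s)
      have h3 := h2.mul ((hin 0).rpow_const (p := -s - 1) (Or.inl (hpos 0).ne'))
      refine (h1.sub h3).congr_deriv ?_
      simp only [hm]
      simp
      ring
    · filter_upwards [ht.eventually hle] with t h1
      have h2 : (1 + v (t • e)) ^ (-s) ≤ (1 + m * t ^ 2) ^ (-s) := by
        refine Real.rpow_le_rpow_of_nonpos (hpos t) ?_ (by linarith)
        have := hvlow (t • e)
        rw [norm_smul, mul_pow, Real.norm_eq_abs, sq_abs] at this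
        rw [hm]; linarith
      simp [heq]
      linarith
  set N := -H - (2 * s * c) • (1 : Matrix (Fin n) (Fin n) ℝ) with hN
  have hNsymm : N.IsSymm := hsymm.neg.sub (Matrix.isSymm_one.smul _)
  have hNpsd : N.PosSemidef := by
    refine Matrix.PosSemidef.of_dotProduct_mulVec_nonneg ?_ fun x => ?_
    · rwa [Matrix.IsHermitian, Matrix.conjTranspose_eq_transpose_of_trivial]
    · have h1 := hquad (WithLp.toLp 2 x)
      rw [← dotProduct_hessianMatrix, EuclideanSpace.real_norm_sq_eq] at h1
      have h2 : ∑ i, x i ^ 2 = x ⬝ᵥ x := by simp [dotProduct, sq]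
      simp only [h2] at h1
      simp only [hN, star_trivial, Matrix.sub_mulVec, Matrix.neg_mulVec, Matrix.smul_mulVec,
        Matrix.one_mulVec, dotProduct_sub, dotProduct_neg, dotProduct_smul, smul_eq_mul]
      linarith
  -- `H = 0 - (N + 2 s c I)`
  have hI : ((2 * s * c) • (1 : Matrix (Fin n) (Fin n) ℝ)).PosSemidef :=
    Matrix.PosSemidef.one.smul (by positivity)
  have hell := (hF1 0 (N + (2 * s * c) • 1) Matrix.isSymm_zero
    (hNsymm.add (Matrix.isSymm_one.smul _)) (hNpsd.add hI)).1
  have hHeq : 0 - (N + (2 * s * c) • (1 : Matrix (Fin n) (Fin n) ℝ)) = H := by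
    rw [hN]; abel
  rw [hHeq, F_zero hF2, Matrix.trace_add, Matrix.trace_smul, Matrix.trace_one] at hell
  have htr := hNpsd.trace_nonneg
  simp only [Fintype.card_fin, smul_eq_mul, sub_zero] at hell
  nlinarith [mul_nonneg hlam.le htr]

/-- A positive multiple of `u = (1 + v) ^ (-s)` is a supersolution with right-hand side
comparable to `(1 + v) ^ (-s - 1)`, on any open set, the origin included. -/
lemma supersolution_profile {n : ℕ} (hn : 2 ≤ n) {lam Lam : ℝ} (hlam : 0 < lam)
    {F : Matrix (Fin n) (Fin n) ℝ → ℝ} (hF1 : SatisfiesH1 lam Lam F) (hF2 : SatisfiesH2 F)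
    {Φ v : EuclideanSpace ℝ (Fin n) → ℝ} {a s c : ℝ} (hs : 0 < s) (hsa : s < a / 2) (hc : 0 < c)
    (hΦ : ViscositySupersolution F {x : EuclideanSpace ℝ (Fin n) | x ≠ 0} (fun _ => 0) Φ)
    (hvlow : ∀ x, c * ‖x‖ ^ 2 ≤ v x) (hv0 : v 0 = 0)
    (hvhom : ∀ σ : ℝ, 0 < σ → ∀ x, v (σ • x) = σ ^ 2 * v x)
    (hvΦ : ∀ x, x ≠ 0 → v x ^ (-(a / 2)) = Φ x) :
    ∃ κ : ℝ, 0 < κ ∧ ∀ k : ℝ, 0 < k → ∀ Ω : Set (EuclideanSpace ℝ (Fin n)), IsOpen Ω →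
      ViscositySupersolution F Ω (fun x => k * (κ * (1 + v x) ^ (-s - 1)))
        (fun x => k * (1 + v x) ^ (-s)) := by
  have hn0 : (0 : ℝ) < n := by exact_mod_cast (by omega : 0 < n)
  have hsa' : 0 < a / 2 - s := sub_pos.2 hsa
  refine ⟨min (4 * lam * (a / 2 - s) * s * c) (2 * s * c * lam * n),
    lt_min (by positivity) (by positivity), fun k hk Ω hΩ x₀ hx₀ φ hφ hmin => ?_⟩
  have hvnn : ∀ x, 0 ≤ v x := fun x => le_trans (by positivity) (hvlow x)
  -- normalize the test function so that it touches `(1 + v) ^ (-s)` itself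
  set d := (1 + v x₀) ^ (-s) - k⁻¹ * φ x₀ with hd
  set ψ : EuclideanSpace ℝ (Fin n) → ℝ := fun x => k⁻¹ * φ x + d with hψ
  have hψc : ContDiffAt ℝ 2 ψ x₀ := (contDiffAt_const.mul hφ).add contDiffAt_const
  have hψH : hessianMatrix ψ x₀ = k⁻¹ • hessianMatrix φ x₀ := by
    have := hessianMatrix_comp hφ (G := fun y => k⁻¹ * y + d) (G1 := fun _ => k⁻¹) (G2 := 0)
      (Eventually.of_forall fun y => by
        simpa using ((hasDerivAt_id y).const_mul k⁻¹).add_const d) (hasDerivAt_const _ _)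
    simpa using this
  have hψ0 : ψ x₀ = (1 + v x₀) ^ (-s) := by simp [hψ, hd]
  have hle : ∀ᶠ x in 𝓝 x₀, ψ x ≤ (1 + v x) ^ (-s) := by
    filter_upwards [hmin.isLocalMin (hΩ.mem_nhds hx₀)] with x hx
    have h1 : k * (1 + v x₀) ^ (-s) - φ x₀ ≤ k * (1 + v x) ^ (-s) - φ x := hx
    have h2 : k⁻¹ * (k * (1 + v x₀) ^ (-s) - φ x₀) ≤ k⁻¹ * (k * (1 + v x) ^ (-s) - φ x) :=
      mul_le_mul_of_nonneg_left h1 (by positivity)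
    rw [mul_sub, mul_sub, inv_mul_cancel_left₀ hk.ne', inv_mul_cancel_left₀ hk.ne'] at h2
    simp only [hψ, hd]
    linarith
  have hpow : 0 ≤ (1 + v x₀) ^ (-s - 1) := Real.rpow_nonneg (by linarith [hvnn x₀]) _
  have key : min (4 * lam * (a / 2 - s) * s * c) (2 * s * c * lam * n) * (1 + v x₀) ^ (-s - 1)
      ≤ F (hessianMatrix ψ x₀) := by
    by_cases hx : x₀ = 0
    · subst hx
      refine le_trans ?_ (supersolution_origin hlam hF1 hF2 hs hc hvlow hψc
        (by rw [hψ0, hv0]; simp) hle)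
      rw [hv0, add_zero, Real.one_rpow, mul_one]
      exact min_le_right _ _
    · exact le_trans (mul_le_mul_of_nonneg_right (min_le_left _ _) hpow)
        (supersolution_away hlam hF1 hF2 hs hsa hc hΦ hvlow hvhom hvΦ hx hψc hψ0 hle)
  rw [hψH, hF2 _ (by positivity) _ (hessianMatrix_isSymm hφ)] at key
  have := mul_le_mul_of_nonneg_left key hk.le
  rwa [mul_inv_cancel_left₀ hk.ne'] at this

/-! ### Choice of the amplitude -/

/-- The growth bound on `f`, at points where `‖x‖ ^ (-γ)` is controlled by
`(1 + v) ^ (-γ / 2)`, is dominated by the gain in `supersolution_profile` once the amplitude `k` is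
small: with `s = (2 - γ) / (2 (p - 1))` the powers of `1 + v` on the two sides agree. -/
lemma growth_bound {w r D k κ fx C₀ p γ s : ℝ} (hw : 0 ≤ w) (hk : 0 < k)
    (hC₀ : 0 < C₀) (hp : 1 < p) (hs : s = (2 - γ) / (2 * (p - 1)))
    (hr : r ^ (-γ) ≤ D * (1 + w) ^ (-(γ / 2))) (hkκ : C₀ * D * k ^ (p - 1) ≤ κ)
    (hf : fx ≤ C₀ * r ^ (-γ) * (k * (1 + w) ^ (-s)) ^ p) :
    fx ≤ k * (κ * (1 + w) ^ (-s - 1)) := by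
  have h1 : 0 < 1 + w := by linarith
  have hkp : k ^ p = k ^ (p - 1) * k := by
    rw [← Real.rpow_add_one hk.ne']; congr 1; ring
  have hexp : (1 + w) ^ (-(γ / 2)) * (1 + w) ^ (-s * p) = (1 + w) ^ (-s - 1) := by
    rw [← Real.rpow_add h1]
    congr 1
    have : p - 1 ≠ 0 := by linarith
    rw [hs]; field_simp; ring
  calc fx ≤ C₀ * r ^ (-γ) * (k * (1 + w) ^ (-s)) ^ p := hf
    _ = C₀ * r ^ (-γ) * (k ^ p * (1 + w) ^ (-s * p)) := by
        rw [Real.mul_rpow hk.le (by positivity), ← Real.rpow_mul h1.le]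
    _ ≤ C₀ * (D * (1 + w) ^ (-(γ / 2))) * (k ^ p * (1 + w) ^ (-s * p)) := by gcongr
    _ = k * ((C₀ * D * k ^ (p - 1)) * ((1 + w) ^ (-(γ / 2)) * (1 + w) ^ (-s * p))) := by
        rw [hkp]; ring
    _ = k * ((C₀ * D * k ^ (p - 1)) * (1 + w) ^ (-s - 1)) := by rw [hexp]
    _ ≤ k * (κ * (1 + w) ^ (-s - 1)) := by gcongr

/-- An amplitude `k` below `ε₀` and small enough for `growth_bound`. -/
lemma exists_amplitude {ε₀ B κ q : ℝ} (hε₀ : 0 < ε₀) (hB : 0 < B) (hκ : 0 < κ) (hq : 0 < q) :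
    ∃ k : ℝ, 0 < k ∧ k < ε₀ ∧ B * k ^ q ≤ κ := by
  have h0 : 0 < (κ / B) ^ (1 / q) := by positivity
  refine ⟨min (ε₀ / 2) ((κ / B) ^ (1 / q)), lt_min (by positivity) h0,
    (min_le_left _ _).trans_lt (by linarith), ?_⟩
  have h1 : min (ε₀ / 2) ((κ / B) ^ (1 / q)) ^ q ≤ κ / B := by
    calc min (ε₀ / 2) ((κ / B) ^ (1 / q)) ^ q ≤ ((κ / B) ^ (1 / q)) ^ q :=
          Real.rpow_le_rpow (lt_min (by positivity) h0).le (min_le_right _ _) hq.le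
      _ = κ / B := by
          rw [← Real.rpow_mul (by positivity), one_div, inv_mul_cancel₀ hq.ne', Real.rpow_one]
  calc _ ≤ B * (κ / B) := by gcongr
    _ = κ := by field_simp

lemma rpow_neg_eq_sq_rpow {r γ : ℝ} (hr : 0 ≤ r) : r ^ (-γ) = (r ^ 2) ^ (-(γ / 2)) := by
  rw [← Real.rpow_natCast, ← Real.rpow_mul hr]
  congr 1
  push_cast
  ring

theorem general_existence
    (n : ℕ) (hn : 2 ≤ n) (lam Lam : ℝ) (hlam : 0 < lam) (hLam : lam ≤ Lam)
    (F : Matrix (Fin n) (Fin n) ℝ → ℝ)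
    (hF1 : SatisfiesH1 lam Lam F) (hF2 : SatisfiesH2 F)
    (Φ : EuclideanSpace ℝ (Fin n) → ℝ) (a : ℝ) (ha : -1 < a)
    (hΦ : IsFundamentalSolution F Φ a)
    (R₀ : ℝ) (hR₀ : 0 < R₀)
    (f : EuclideanSpace ℝ (Fin n) → ℝ → ℝ)
    (hf_cont : ContinuousOn (fun q : EuclideanSpace ℝ (Fin n) × ℝ => f q.1 q.2)
      ({x : EuclideanSpace ℝ (Fin n) | R₀ ≤ ‖x‖} ×ˢ Set.Ioi (0 : ℝ)))
    (hf_pos : ∀ x : EuclideanSpace ℝ (Fin n), R₀ ≤ ‖x‖ → ∀ s : ℝ, 0 < s → 0 < f x s)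
    (ε₀ C₀ p γ : ℝ) (hε₀ : 0 < ε₀) (hC₀ : 0 < C₀)
    (hp : 1 < p) (hγ : γ < 2) (hcrit : (2 - γ) / (p - 1) < a)
    (hf_upper : ∀ x : EuclideanSpace ℝ (Fin n), R₀ ≤ ‖x‖ →
      ∀ s : ℝ, 0 < s → s < ε₀ → f x s ≤ C₀ * ‖x‖ ^ (-γ) * s ^ p) :
    (∃ u : EuclideanSpace ℝ (Fin n) → ℝ,
      ContinuousOn u {x : EuclideanSpace ℝ (Fin n) | R₀ < ‖x‖} ∧
      (∀ x : EuclideanSpace ℝ (Fin n), R₀ < ‖x‖ → 0 < u x) ∧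
      ViscositySupersolution F {x : EuclideanSpace ℝ (Fin n) | R₀ < ‖x‖}
        (fun x => f x (u x)) u) ∧
    (γ ≤ 0 →
      ContinuousOn (fun q : EuclideanSpace ℝ (Fin n) × ℝ => f q.1 q.2)
        ((Set.univ : Set (EuclideanSpace ℝ (Fin n))) ×ˢ Set.Ioi (0 : ℝ)) →
      (∀ x : EuclideanSpace ℝ (Fin n), ∀ s : ℝ, 0 < s → 0 < f x s) →
      (∀ x : EuclideanSpace ℝ (Fin n), ∀ s : ℝ, 0 < s → s < ε₀ →
        f x s ≤ C₀ * ‖x‖ ^ (-γ) * s ^ p) →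
      ∃ u : EuclideanSpace ℝ (Fin n) → ℝ, Continuous u ∧ (∀ x, 0 < u x) ∧
        ViscositySupersolution F Set.univ (fun x => f x (u x)) u) := by
  have hp1 : 0 < p - 1 := by linarith
  have ha0 : 0 < a := lt_trans (div_pos (by linarith) hp1) hcrit
  obtain ⟨hΦc, -, ⟨-, hΦsup⟩, -, hΦhom⟩ := hΦ
  obtain ⟨v, c, C, hc, hC, hvc, hvlow, hvup, hvhom, hvΦ⟩ :=
    exists_quadratic_profile hn ha0 hΦc (hΦhom ha0.ne')
  have hvnn : ∀ x, 0 ≤ v x := fun x => le_trans (by positivity) (hvlow x)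
  have hv0 : v 0 = 0 := le_antisymm (by simpa using hvup 0) (hvnn 0)
  obtain ⟨s, hs⟩ : ∃ s, s = (2 - γ) / (2 * (p - 1)) := ⟨_, rfl⟩
  have hs0 : 0 < s := by rw [hs]; exact div_pos (by linarith) (by linarith)
  have hsa : s < a / 2 := by
    have : s = (2 - γ) / (p - 1) / 2 := by rw [hs]; field_simp
    rw [this]; linarith
  obtain ⟨κ, hκ, hsuper⟩ := supersolution_profile hn hlam hF1 hF2 hs0 hsa hc hΦsup hvlow hv0
    hvhom hvΦ
  have hucont : ∀ k : ℝ, Continuous fun x => k * (1 + v x) ^ (-s) := fun k =>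
    continuous_const.mul ((continuous_const.add hvc).rpow_const fun x =>
      Or.inl (show 1 + v x ≠ 0 from (by linarith [hvnn x] : 0 < 1 + v x).ne'))
  have hupos : ∀ k : ℝ, 0 < k → ∀ x, 0 < k * (1 + v x) ^ (-s) := fun k hk x => by
    have := hvnn x
    positivity
  have hule : ∀ k : ℝ, 0 < k → k < ε₀ → ∀ x, k * (1 + v x) ^ (-s) < ε₀ := fun k hk hkε x => by
    have : (1 + v x) ^ (-s) ≤ 1 :=
      Real.rpow_le_one_of_one_le_of_nonpos (by linarith [hvnn x]) (by linarith)
    nlinarith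
  -- for `γ ≤ 0` the weight `‖x‖ ^ (-γ)` is controlled on the whole space
  have hDneg : γ ≤ 0 → ∀ x : EuclideanSpace ℝ (Fin n),
      ‖x‖ ^ (-γ) ≤ (1 / c) ^ (-(γ / 2)) * (1 + v x) ^ (-(γ / 2)) := by
    intro hγ0 x
    have h0 := hvnn x
    rw [rpow_neg_eq_sq_rpow (norm_nonneg x), ← Real.mul_rpow (by positivity) (by positivity)]
    refine Real.rpow_le_rpow (by positivity) ?_ (by linarith)
    rw [one_div_mul_eq_div, le_div_iff₀ hc]
    linarith [hvlow x]
  refine ⟨?_, fun hγ0 _ _ hf_up => ?_⟩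
  · -- away from the ball of radius `R₀`, `‖x‖ ^ 2` and `1 + v` are comparable
    obtain ⟨D, hD, hDb⟩ : ∃ D : ℝ, 0 < D ∧ ∀ x : EuclideanSpace ℝ (Fin n), R₀ < ‖x‖ →
        ‖x‖ ^ (-γ) ≤ D * (1 + v x) ^ (-(γ / 2)) := by
      rcases le_total γ 0 with hγ0 | hγ0
      · exact ⟨_, by positivity, fun x _ => hDneg hγ0 x⟩
      · refine ⟨(1 / (1 / R₀ ^ 2 + C)) ^ (-(γ / 2)), by positivity, fun x hx => ?_⟩
        have h0 := hvnn x
        rw [rpow_neg_eq_sq_rpow (norm_nonneg x), ← Real.mul_rpow (by positivity) (by positivity)]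
        refine Real.rpow_le_rpow_of_nonpos (by positivity) ?_ (by linarith)
        rw [one_div_mul_eq_div, div_le_iff₀ (by positivity)]
        have h1 : 1 ≤ ‖x‖ ^ 2 / R₀ ^ 2 := by
          rw [one_le_div (by positivity)]; gcongr
        have h2 : ‖x‖ ^ 2 * (1 / R₀ ^ 2 + C) = ‖x‖ ^ 2 / R₀ ^ 2 + C * ‖x‖ ^ 2 := by ring
        rw [h2]
        linarith [hvup x]
    obtain ⟨k, hk, hkε, hkκ⟩ := exists_amplitude hε₀ (mul_pos hC₀ hD) hκ hp1
    refine ⟨fun x => k * (1 + v x) ^ (-s), (hucont k).continuousOn, fun x _ => hupos k hk x, ?_⟩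
    intro x₀ hx₀ φ hφ hmin
    have hopen : IsOpen {x : EuclideanSpace ℝ (Fin n) | R₀ < ‖x‖} :=
      isOpen_lt continuous_const continuous_norm
    refine le_trans ?_ (hsuper k hk _ hopen x₀ hx₀ φ hφ hmin)
    exact growth_bound (hvnn x₀) hk hC₀ hp hs (hDb x₀ hx₀) hkκ
      (hf_upper x₀ (le_of_lt hx₀) _ (hupos k hk x₀) (hule k hk hkε x₀))
  · obtain ⟨k, hk, hkε, hkκ⟩ := exists_amplitude hε₀
      (mul_pos hC₀ (by positivity : 0 < (1 / c) ^ (-(γ / 2)))) hκ hp1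
    refine ⟨fun x => k * (1 + v x) ^ (-s), hucont k, hupos k hk, ?_⟩
    intro x₀ hx₀ φ hφ hmin
    refine le_trans ?_ (hsuper k hk _ isOpen_univ x₀ hx₀ φ hφ hmin)
    exact growth_bound (hvnn x₀) hk hC₀ hp hs (hDneg hγ0 x₀) hkκ
      (hf_up x₀ _ (hupos k hk x₀) (hule k hk hkε x₀))
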